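/- Let A be an alternative algebra over a field F of characteristic not equal to 2. If A is anticommutative (x*y = −y*x for all x, y ∈ A) and every F-linear endomorphism of A is a quasiderivation, then A has zero multiplication: x*y = 0 for all x, y ∈ A. -/

import Mathlib

/-!
If every endomorphism is a quasiderivation, then `x * y = 0` forces `f x * y + x * f y = 0` for
every endomorphism `f`. When `y` is not a multiple of `x`, one may prescribe `f x = 0` and
`f y = z`, so `x` annihilates the whole algebra. Squares vanish in an anticommutative algebra of
characteristic not two, so alternativity gives `x * (x * y) = 0` and `(x * y) * y = 0`. The first
identity settles the case where `x * y` is not a multiple of `x`; in the other case `x` is an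
eigenvector of right multiplication by `y`, which squares to zero.
-/

/-- A linear endomorphism `f` of an algebra is a quasiderivation if the map
`(x, y) ↦ f x * y + x * f y` is the product followed by a linear endomorphism `Q`. The scalars
need not be compatible with the multiplication. -/
def IsQuasiderivation {R A : Type*} [Semiring R] [NonUnitalNonAssocSemiring A] [Module R A]
    (f : A →ₗ[R] A) : Prop :=
  ∃ Q : A →ₗ[R] A, ∀ x y : A, Q (x * y) = f x * y + x * f y

theorem IsQuasiderivation.map_mul_add_mul_map_eq_zero {R A : Type*} [Semiring R]
    [NonUnitalNonAssocSemiring A] [Module R A] {f : A →ₗ[R] A} (hf : IsQuasiderivation f)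
    {x y : A} (hxy : x * y = 0) : f x * y + x * f y = 0 := by
  obtain ⟨Q, hQ⟩ := hf
  rw [← hQ, hxy, map_zero]

theorem mul_eq_zero_of_mul_eq_zero_of_notMem_span {K A : Type*} [DivisionRing K]
    [NonUnitalNonAssocRing A] [Module K A]
    (hq : ∀ f : A →ₗ[K] A, IsQuasiderivation f) {x y : A} (hxy : x * y = 0)
    (hy : y ∉ Submodule.span K {x}) (z : A) : x * z = 0 := by
  obtain ⟨f, hf, hfy⟩ :=
    LinearMap.exists_extend_of_notMem (0 : Submodule.span K {x} →ₗ[K] A) hy z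
  have hfx : f x = 0 := LinearMap.congr_fun hf ⟨x, Submodule.mem_span_singleton_self x⟩
  simpa only [hfx, hfy, zero_mul, zero_add] using (hq f).map_mul_add_mul_map_eq_zero hxy

theorem mul_eq_zero_of_mem_span_of_mul_mul_eq_zero {R A : Type*} [Semiring R] [IsCancelMulZero R]
    [NonUnitalNonAssocSemiring A] [Module R A] [Module.IsTorsionFree R A] [IsScalarTower R A A]
    {x y : A} (hx : x * y ∈ Submodule.span R {x}) (hxy : (x * y) * y = 0) : x * y = 0 := by
  obtain ⟨r, hr⟩ := Submodule.mem_span_singleton.mp hx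
  have hrxy : r • (x * y) = 0 := by rw [← smul_mul_assoc, hr, hxy]
  rcases smul_eq_zero.mp hrxy with rfl | h
  · rw [← hr, zero_smul]
  · exact h

theorem eq_zero_of_eq_neg_of_two_ne_zero {R M : Type*} [Semiring R] [IsCancelMulZero R]
    [AddCommGroup M] [Module R M] [Module.IsTorsionFree R M] (h2 : (2 : R) ≠ 0) {a : M}
    (ha : a = -a) : a = 0 := by
  rwa [← smul_eq_zero_iff_right h2, two_smul, ← eq_neg_iff_add_eq_zero]

theorem anticommutative_alternative_quasiderivations_zero_mul_general
    {K A : Type*} [DivisionRing K] [NonUnitalNonAssocRing A] [Module K A] [IsScalarTower K A A]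
    (hleft : ∀ x y : A, x * (x * y) = 0) (hright : ∀ x y : A, (x * y) * y = 0)
    (hq : ∀ f : A →ₗ[K] A, IsQuasiderivation f) (x y : A) : x * y = 0 := by
  by_cases hx : x * y ∈ Submodule.span K {x}
  · exact mul_eq_zero_of_mem_span_of_mul_mul_eq_zero hx (hright x y)
  · exact mul_eq_zero_of_mul_eq_zero_of_notMem_span hq (hleft x y) hx y

/-- An anticommutative alternative algebra over a field of characteristic ≠ 2 in which
every linear endomorphism is a quasiderivation has zero multiplication. -/
theorem anticommutative_alternative_quasiderivations_zero_mul
    {F A : Type*} [Field F] (hchar : ringChar F ≠ 2)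
    [NonUnitalNonAssocRing A] [Module F A] [SMulCommClass F A A] [IsScalarTower F A A]
    (alt1 : ∀ x y : A, (x * x) * y = x * (x * y))
    (alt2 : ∀ x y : A, (x * y) * y = x * (y * y))
    (hanti : ∀ x y : A, x * y = -(y * x))
    (hq : ∀ f : A →ₗ[F] A, ∃ Q : A →ₗ[F] A, ∀ x y : A, Q (x * y) = f x * y + x * f y) :
    ∀ x y : A, x * y = 0 := by
  have hsq (x : A) : x * x = 0 :=
    eq_zero_of_eq_neg_of_two_ne_zero (Ring.two_ne_zero hchar) (hanti x x)
  exact anticommutative_alternative_quasiderivations_zero_mul_general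
    (fun x y => by rw [← alt1, hsq, zero_mul]) (fun x y => by rw [alt2, hsq, mul_zero]) hq
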